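/- Let k be a positive integer with gcd(k, 6) = 1, n = 6k, and d = (5^{6k} - 1)/(5^k - 1) + 1. Let β ∈ F_{5^n} satisfy β⁶ + β + 2 = 0, and write [x_0, x_1, x_2, x_3, x_4, x_5] for the element x_0 + x_1β + x_2β² + x_3β³ + x_4β⁴ + x_5β⁵ with x_i ∈ F_{5^k}. Then for every u ∈ F_{5^k} with u ≠ 0, the polynomial a^{-1}x^d is a complete permutation polynomial over F_{5^n} for each of the following a: [u,0,-u,3u,0,-3u], [u,u,0,-2u,2u,0], [u,u,0,-u,u,2u], [u,u,u,u,u,2u], [u,u,2u,-u,0,-u], [u,u,-2u,2u,-u,u], [u,u,-u,0,3u,3u], [u,2u,0,u,3u,u], [u,2u,u,0,2u,2u], [u,2u,u,2u,u,u], [u,2u,2u,-2u,-u,u], [u,2u,-2u,-u,2u,u], [u,-2u,2u,u,-2u,2u], [u,2u,-u,0,0,u], [u,-u,-2u,2u,-u,2u], [0,0,u,u,-2u,0], [0,0,u,3u,-u,-3u], [0,u,u,u,u,0]. -/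

import Mathlib

/-- `vec6 β x₀ x₁ x₂ x₃ x₄ x₅ = x₀ + x₁β + x₂β² + x₃β³ + x₄β⁴ + x₅β⁵`,
the element written `[x₀, x₁, x₂, x₃, x₄, x₅]` in the basis `{1, β, …, β⁵}`. -/
def vec6 {F : Type*} [CommRing F] (β x0 x1 x2 x3 x4 x5 : F) : F :=
  x0 + x1 * β + x2 * β ^ 2 + x3 * β ^ 3 + x4 * β ^ 4 + x5 * β ^ 5

/-- Coefficient vectors of elements of `F_5[X]/(X^6+X+2)`. -/
structure M6 where
  (a0 a1 a2 a3 a4 a5 : ZMod 5)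
deriving DecidableEq

set_option linter.unusedSimpArgs false

namespace M6

/-- multiplication modulo `X^6+X+2` -/
def mul (x y : M6) : M6 :=
  let r0 := x.a0 * y.a0
  let r1 := x.a0 * y.a1 + x.a1 * y.a0
  let r2 := x.a0 * y.a2 + x.a1 * y.a1 + x.a2 * y.a0
  let r3 := x.a0 * y.a3 + x.a1 * y.a2 + x.a2 * y.a1 + x.a3 * y.a0
  let r4 := x.a0 * y.a4 + x.a1 * y.a3 + x.a2 * y.a2 + x.a3 * y.a1 + x.a4 * y.a0
  let r5 := x.a0 * y.a5 + x.a1 * y.a4 + x.a2 * y.a3 + x.a3 * y.a2 + x.a4 * y.a1 + x.a5 * y.a0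
  let r6 := x.a1 * y.a5 + x.a2 * y.a4 + x.a3 * y.a3 + x.a4 * y.a2 + x.a5 * y.a1
  let r7 := x.a2 * y.a5 + x.a3 * y.a4 + x.a4 * y.a3 + x.a5 * y.a2
  let r8 := x.a3 * y.a5 + x.a4 * y.a4 + x.a5 * y.a3
  let r9 := x.a4 * y.a5 + x.a5 * y.a4
  let r10 := x.a5 * y.a5
  ⟨r0 - 2 * r6, r1 - r6 - 2 * r7, r2 - r7 - 2 * r8, r3 - r8 - 2 * r9,
    r4 - r9 - 2 * r10, r5 - r10⟩

/-- addition -/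
def plus (x y : M6) : M6 :=
  ⟨x.a0 + y.a0, x.a1 + y.a1, x.a2 + y.a2, x.a3 + y.a3, x.a4 + y.a4, x.a5 + y.a5⟩

/-- scalars -/
def sc (c : ZMod 5) : M6 := ⟨c, 0, 0, 0, 0, 0⟩

/-- fifth power -/
def p5 (x : M6) : M6 := mul x (mul (mul x x) (mul x x))

/-- multiply the coefficient list by `s + b`, with carry -/
def lin (b : M6) : M6 → List M6 → List M6
  | r, [] => [r]
  | r, c :: l => plus r (mul b c) :: lin b c l

/-- coefficients of the product of the six `s + b^(5^i)` -/
def nrmList (b : M6) : List M6 :=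
  let b1 := p5 b
  let b2 := p5 b1
  let b3 := p5 b2
  let b4 := p5 b3
  let b5 := p5 b4
  let z := sc 0
  lin b5 z (lin b4 z (lin b3 z (lin b2 z (lin b1 z (lin b z [sc 1])))))

/-- coefficients of `(D_7(s+c) - D_7(c))/s` -/
def dick (c α : ZMod 5) : List M6 :=
  [sc (7*c^6 - 35*α*c^4 + 42*α^2*c^2 - 7*α^3), sc (21*c^5-70*α*c^3+42*α^2*c),
   sc (35*c^4-70*α*c^2+14*α^2), sc (35*c^3-35*α*c), sc (21*c^2-7*α), sc (7*c), sc 1]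

/-- the computational certificate -/
def Good (b : M6) (c α : ZMod 5) : Prop :=
  p5 (p5 (p5 (p5 (p5 (p5 b))))) = b ∧ nrmList b = dick c α ∧
    7*c^6 - 35*α*c^4 + 42*α^2*c^2 - 7*α^3 ≠ 0

instance (b : M6) (c α : ZMod 5) : Decidable (Good b c α) := by
  unfold Good; infer_instance

variable {F : Type*} [Field F]

instance fact5 : Fact (Nat.Prime 5) := ⟨by norm_num⟩

/-- evaluation at `β` -/
def ev (φ : ZMod 5 →+* F) (β : F) (x : M6) : F :=
  φ x.a0 + φ x.a1 * β + φ x.a2 * β ^ 2 + φ x.a3 * β ^ 3 + φ x.a4 * β ^ 4 + φ x.a5 * β ^ 5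

/-- evaluation of a coefficient list -/
def evP (φ : ZMod 5 →+* F) (β s : F) : List M6 → F
  | [] => 0
  | c :: l => ev φ β c + s * evP φ β s l

theorem ev_mul (φ : ZMod 5 →+* F) (β : F) (hβ : β ^ 6 + β + 2 = 0) (x y : M6) :
    ev φ β (mul x y) = ev φ β x * ev φ β y := by
  simp only [ev, mul, map_add, map_sub, map_mul, map_ofNat]
  generalize φ x.a0 = x0
  generalize φ x.a1 = x1
  generalize φ x.a2 = x2
  generalize φ x.a3 = x3
  generalize φ x.a4 = x4
  generalize φ x.a5 = x5
  generalize φ y.a0 = y0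
  generalize φ y.a1 = y1
  generalize φ y.a2 = y2
  generalize φ y.a3 = y3
  generalize φ y.a4 = y4
  generalize φ y.a5 = y5
  linear_combination (-((x1 * y5 + x2 * y4 + x3 * y3 + x4 * y2 + x5 * y1)
    + (x2 * y5 + x3 * y4 + x4 * y3 + x5 * y2) * β + (x3 * y5 + x4 * y4 + x5 * y3) * β ^ 2
    + (x4 * y5 + x5 * y4) * β ^ 3 + x5 * y5 * β ^ 4)) * hβ

theorem ev_plus (φ : ZMod 5 →+* F) (β : F) (x y : M6) :
    ev φ β (plus x y) = ev φ β x + ev φ β y := by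
  simp only [ev, plus, map_add]; ring

theorem ev_sc (φ : ZMod 5 →+* F) (β : F) (c : ZMod 5) : ev φ β (sc c) = φ c := by
  simp [ev, sc]

theorem ev_p5 (φ : ZMod 5 →+* F) (β : F) (hβ : β ^ 6 + β + 2 = 0) (x : M6) :
    ev φ β (p5 x) = ev φ β x ^ 5 := by
  simp only [p5, ev_mul φ β hβ]; ring

theorem evP_lin (φ : ZMod 5 →+* F) (β s : F) (hβ : β ^ 6 + β + 2 = 0) (b : M6) (l : List M6) :
    ∀ r, evP φ β s (lin b r l) = ev φ β r + (s + ev φ β b) * evP φ β s l := by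
  induction l with
  | nil => intro r; simp [lin, evP]
  | cons c l ih =>
    intro r
    simp only [lin, evP, ih, ev_plus, ev_mul φ β hβ]
    ring

theorem good_spec (φ : ZMod 5 →+* F) (β : F) (hβ : β ^ 6 + β + 2 = 0) (b : M6) (c α : ZMod 5)
    (h : Good b c α) (B : F) (hB : B = ev φ β b) :
    B ^ 5 ^ 6 = B ∧ B ≠ 0 ∧
    ∀ s : F, s * ((s + B) * (s + B ^ 5 ^ 1) * (s + B ^ 5 ^ 2) * (s + B ^ 5 ^ 3) * (s + B ^ 5 ^ 4)
      * (s + B ^ 5 ^ 5)) =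
      ((s + φ c) ^ 7 - 7 * φ α * (s + φ c) ^ 5 + 14 * φ α ^ 2 * (s + φ c) ^ 3
        - 7 * φ α ^ 3 * (s + φ c)) -
      (φ c ^ 7 - 7 * φ α * φ c ^ 5 + 14 * φ α ^ 2 * φ c ^ 3 - 7 * φ α ^ 3 * φ c) := by
  obtain ⟨h1, h2, h3⟩ := h
  have e1 : B ^ 5 ^ 1 = ev φ β (p5 b) := by rw [ev_p5 φ β hβ, hB, pow_one]
  have e2 : B ^ 5 ^ 2 = ev φ β (p5 (p5 b)) := by rw [ev_p5 φ β hβ, ← e1, ← pow_mul, ← pow_succ]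
  have e3 : B ^ 5 ^ 3 = ev φ β (p5 (p5 (p5 b))) := by
    rw [ev_p5 φ β hβ, ← e2, ← pow_mul, ← pow_succ]
  have e4 : B ^ 5 ^ 4 = ev φ β (p5 (p5 (p5 (p5 b)))) := by
    rw [ev_p5 φ β hβ, ← e3, ← pow_mul, ← pow_succ]
  have e5 : B ^ 5 ^ 5 = ev φ β (p5 (p5 (p5 (p5 (p5 b))))) := by
    rw [ev_p5 φ β hβ, ← e4, ← pow_mul, ← pow_succ]
  have e6 : B ^ 5 ^ 6 = B := by
    conv_rhs => rw [hB, ← h1, ev_p5 φ β hβ, ← e5, ← pow_mul, ← pow_succ]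
  have key : ∀ s : F, (s + B) * (s + B ^ 5 ^ 1) * (s + B ^ 5 ^ 2) * (s + B ^ 5 ^ 3)
      * (s + B ^ 5 ^ 4) * (s + B ^ 5 ^ 5) = evP φ β s (dick c α) := by
    intro s
    rw [← h2, e1, e2, e3, e4, e5, hB]
    simp only [nrmList, evP_lin φ β s hβ, ev_sc, evP, map_zero, map_one]
    ring
  refine ⟨e6, ?_, ?_⟩
  · intro h0
    have := key 0
    rw [h0] at this
    simp only [dick, evP, ev_sc] at this
    apply h3
    apply φ.injective
    simpa using this.symm
  · intro s
    rw [key s]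
    simp only [dick, evP, ev_sc, map_add, map_sub, map_mul, map_pow, map_ofNat, map_one]
    ring

end M6

section field
variable {F : Type*} [Field F]

/-- seventh powers are injective on elements killed by an exponent coprime to 7 -/
theorem pow7_inj (m : ℕ) (hm : Nat.Coprime 7 m) (y z : F) (hy : y ^ m * y = y) (hz : z ^ m * z = z)
    (h : y ^ 7 = z ^ 7) : y = z := by
  by_cases hz0 : z = 0
  · subst hz0
    simpa using h
  have hy0 : y ≠ 0 := by
    rintro rfl
    exact hz0 (by simpa using h.symm)
  have hy1 : y ^ m = 1 := mul_right_cancel₀ hy0 (by rw [hy, one_mul])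
  have hz1 : z ^ m = 1 := mul_right_cancel₀ hz0 (by rw [hz, one_mul])
  have h7 : (y / z) ^ 7 = 1 := by
    rw [div_pow, h, div_self (pow_ne_zero _ hz0)]
  have hm' : (y / z) ^ m = 1 := by rw [div_pow, hy1, hz1, div_one]
  have h1 : orderOf (y / z) ∣ Nat.gcd 7 m :=
    Nat.dvd_gcd (orderOf_dvd_of_pow_eq_one h7) (orderOf_dvd_of_pow_eq_one hm')
  rw [hm] at h1
  have := orderOf_eq_one_iff.1 (Nat.dvd_one.1 h1)
  exact (div_eq_one_iff_eq hz0).1 this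

/-- Dickson polynomial of degree 7 -/
def D7 (α x : F) : F := x ^ 7 - 7 * α * x ^ 5 + 14 * α ^ 2 * x ^ 3 - 7 * α ^ 3 * x

theorem D7_inj (q : ℕ) [ExpChar F 5] (k : ℕ) (hq : q = 5 ^ k) (h7 : Nat.Coprime 7 (q ^ 2 - 1))
    (hsq : ∀ δ : F, δ ^ q = δ → ∃ r, δ = r * r) (α : F) (hα : α ^ q = α) (x x' : F)
    (hx : x ^ q = x) (hx' : x' ^ q = x') (h : D7 α x = D7 α x') : x = x' := by
  have hqpos : 0 < q := by rw [hq]; positivity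
  have hadd : ∀ a b : F, (a + b) ^ q = a ^ q + b ^ q := by
    intro a b; rw [hq]; exact add_pow_expChar_pow ..
  have hsub : ∀ a b : F, (a - b) ^ q = a ^ q - b ^ q := by
    intro a b; rw [hq]; exact sub_pow_expChar_pow ..
  have h5 : (5 : F) = 0 := by
    have : CharP F 5 := by
      cases ‹ExpChar F 5› with
      | prime _ => assumption
    exact_mod_cast CharP.cast_eq_zero F 5
  have hc : ∀ n : ℕ, ((n : F)) ^ q = n := by
    intro n
    have hs := map_natCast (iterateFrobenius F 5 k) n
    rw [iterateFrobenius_def, ← hq] at hs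
    exact hs
  have h2q : (2 : F) ^ q = 2 := by exact_mod_cast hc 2
  have h3q : (3 : F) ^ q = 3 := by exact_mod_cast hc 3
  have hroot : ∀ x : F, x ^ q = x → ∃ y : F, y ^ 2 - x * y + α = 0 ∧ y ^ (q ^ 2) = y := by
    intro x hx
    obtain ⟨r, hr⟩ := hsq (x ^ 2 + α) (by rw [hadd, ← pow_mul, mul_comm, pow_mul, hx, hα])
    have hr2 : (r ^ q) ^ 2 = r ^ 2 := by
      rw [← pow_mul, mul_comm, pow_mul, sq r, ← hr, hadd, ← pow_mul, mul_comm, pow_mul, hx, hα]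
    have hrq : r ^ (q ^ 2) = r := by
      rw [sq q, pow_mul]
      rcases sq_eq_sq_iff_eq_or_eq_neg.1 hr2 with e | e
      · rw [e, e]
      · have : (-r) ^ q = - r ^ q := by
          have := hsub 0 r
          rw [zero_pow hqpos.ne'] at this
          simpa using this
        rw [e, this, e, neg_neg]
    refine ⟨3 * (x + r), ?_, ?_⟩
    · linear_combination (9 : F) * (-hr) + h5 * (3 * x * r + 2 * α + x ^ 2 * 3)
    · rw [sq q, pow_mul] at hrq ⊢
      rw [mul_pow, hadd, mul_pow, hadd, h3q, h3q, hx, hx, hrq]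
  obtain ⟨y, hy, hyq⟩ := hroot x hx
  obtain ⟨z, hz, hzq⟩ := hroot x' hx'
  have hq2 : q ^ 2 - 1 + 1 = q ^ 2 := Nat.sub_add_cancel (Nat.one_le_pow _ _ hqpos)
  have inj : ∀ y z : F, y ^ q ^ 2 = y → z ^ q ^ 2 = z → y ^ 7 = z ^ 7 → y = z := by
    intro y z hy hz h
    exact pow7_inj _ h7 y z (by rw [← pow_succ, hq2, hy]) (by rw [← pow_succ, hq2, hz]) h
  -- the other roots
  have hyw : α = y * (x - y) := by linear_combination hy
  have hzw : α = z * (x' - z) := by linear_combination hz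
  have hx2 : ∀ x : F, x ^ q = x → x ^ q ^ 2 = x := by
    intro x hx; rw [sq, pow_mul, hx, hx]
  have hsub2 : ∀ a b : F, (a - b) ^ q ^ 2 = a ^ q ^ 2 - b ^ q ^ 2 := by
    intro a b; rw [sq, pow_mul, hsub, hsub, ← pow_mul, ← pow_mul]
  have hD : ∀ x y : F, α = y * (x - y) → D7 α x = y ^ 7 + (x - y) ^ 7 := by
    intro x y h; rw [h, D7]; ring
  rw [hD x y hyw, hD x' z hzw] at h
  have hprod : (y ^ 7 - z ^ 7) * (y ^ 7 - (x' - z) ^ 7) = 0 := by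
    have e : y ^ 7 * (x - y) ^ 7 = z ^ 7 * (x' - z) ^ 7 := by
      rw [← mul_pow, ← mul_pow, ← hyw, ← hzw]
    linear_combination y ^ 7 * h - e
  have hwq : (x' - z) ^ q ^ 2 = x' - z := by rw [hsub2, hzq, hx2 _ hx']
  have hvq : (x - y) ^ q ^ 2 = x - y := by rw [hsub2, hyq, hx2 _ hx]
  rcases mul_eq_zero.1 hprod with e | e
  · have e' := sub_eq_zero.1 e
    have h1 := inj y z hyq hzq e'
    have h2 := inj (x - y) (x' - z) hvq hwq (by linear_combination h - e')
    linear_combination h1 + h2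
  · have e' := sub_eq_zero.1 e
    have h1 := inj y (x' - z) hyq hwq e'
    have h2 := inj (x - y) z hvq hzq (by linear_combination h - e')
    linear_combination h1 + h2

end field

theorem mod6_of_gcd (k : ℕ) (hk6 : Nat.gcd k 6 = 1) : k % 6 = 1 ∨ k % 6 = 5 := by
  rw [Nat.gcd_comm, Nat.gcd_rec] at hk6
  have h : k % 6 < 6 := Nat.mod_lt _ (by norm_num)
  generalize k % 6 = r at *
  interval_cases r <;> simp_all

theorem pow5_mod7 (k : ℕ) (hk6 : Nat.gcd k 6 = 1) : Nat.Coprime 7 ((5 ^ k) ^ 2 - 1) := by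
  rw [Nat.Prime.coprime_iff_not_dvd (by norm_num)]
  intro h
  have h1 : 1 ≤ (5 ^ k) ^ 2 := Nat.one_le_pow _ _ (by positivity)
  have h2 : (5 ^ k) ^ 2 ≡ 1 [MOD 7] := ((Nat.modEq_iff_dvd' h1).2 h).symm
  have hk : k % 6 = 1 ∨ k % 6 = 5 := by
    exact mod6_of_gcd k hk6
  have h3 : 5 ^ k ≡ 5 ^ (k % 6) [MOD 7] := by
    conv_lhs => rw [← Nat.div_add_mod k 6, pow_add, pow_mul]
    have : (5 ^ 6) ^ (k / 6) ≡ 1 ^ (k / 6) [MOD 7] := Nat.ModEq.pow _ (by decide)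
    simpa using this.mul_right (5 ^ (k % 6))
  have h4 := (h3.pow 2).symm.trans h2
  rcases hk with e | e <;> rw [e] at h4 <;> revert h4 <;> decide

theorem core (k : ℕ) (hk6 : Nat.gcd k 6 = 1)
    (d : ℕ) (hd : d = (5 ^ (6 * k) - 1) / (5 ^ k - 1) + 1)
    (F : Type*) [Field F] [Fintype F] (hF : Fintype.card F = 5 ^ (6 * k)) [CharP F 5]
    (φ : ZMod 5 →+* F) (β : F) (hβ : β ^ 6 + β + 2 = 0)
    (u : F) (hu : u ^ (5 ^ k) = u) (hu0 : u ≠ 0) (b : M6) (c α : ZMod 5) (hb : M6.Good b c α)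
    (a : F) (ha : a = u * M6.ev φ β b) :
      Function.Bijective (fun x : F => a⁻¹ * x ^ d) ∧
      Function.Bijective (fun x : F => a⁻¹ * x ^ d + x) := by
  obtain ⟨B, hB⟩ : ∃ B, B = M6.ev φ β b := ⟨_, rfl⟩
  obtain ⟨hB6, hB0, hP⟩ := M6.good_spec φ β hβ b c α hb B hB
  rw [← hB] at ha
  have hkk : k % 6 = 1 ∨ k % 6 = 5 := by
    exact mod6_of_gcd k hk6
  have hkpos : k ≠ 0 := by rintro rfl; simp at hk6
  have : ExpChar F 5 := ExpChar.prime (by norm_num)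
  have h7 := pow5_mod7 k hk6
  obtain ⟨q, hq⟩ : ∃ q, q = 5 ^ k := ⟨_, rfl⟩
  have hq5 : 5 ≤ q := by rw [hq]; exact Nat.le_self_pow hkpos 5
  have hqodd : Odd q := by rw [hq]; exact Odd.pow (by decide)
  have hq6 : 5 ^ (6 * k) = q ^ 6 := by rw [hq, ← pow_mul, mul_comm]
  rw [← hq] at h7 hu
  have hd' : d = (1 + q + q ^ 2 + q ^ 3 + q ^ 4 + q ^ 5) + 1 := by
    rw [hd, hq6, ← hq, ← Nat.geomSum_eq (by omega : 2 ≤ q)]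
    simp [Finset.sum_range_succ]
  have hcard : ∀ x : F, x ^ q ^ 6 = x := by
    intro x
    rw [← hq6, ← hF]; exact FiniteField.pow_card x
  have hadd : ∀ a b : F, (a + b) ^ q = a ^ q + b ^ q := by
    intro a b; rw [hq]; exact add_pow_expChar_pow ..
  have hsc : ∀ c : ZMod 5, (φ c) ^ q = φ c := by
    intro c
    rw [← map_pow, hq]
    congr 1
    exact ZMod.pow_card_pow c
  -- the norm
  obtain ⟨N, hN⟩ : ∃ N : F → F, ∀ x, N x = x ^ (1 + q + q ^ 2 + q ^ 3 + q ^ 4 + q ^ 5) :=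
    ⟨_, fun _ => rfl⟩
  have hNmul : ∀ x y, N (x * y) = N x * N y := by intro x y; simp only [hN, mul_pow]
  have hNq : ∀ x, N x ^ q = N x := by
    intro x
    have h1 : N x ^ q = x ^ q * x ^ q ^ 2 * x ^ q ^ 3 * x ^ q ^ 4 * x ^ q ^ 5 * x ^ q ^ 6 := by
      rw [hN, ← pow_mul, ← pow_add, ← pow_add, ← pow_add, ← pow_add, ← pow_add]
      congr 1; ring
    rw [h1, hcard, hN]
    simp only [pow_add, pow_one]
    ring
  have hNfix : ∀ t, t ^ q = t → N t = t ^ 6 := by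
    intro t ht
    have h : ∀ i, t ^ q ^ i = t := by
      intro i
      induction i with
      | zero => simp
      | succ i ih => rw [pow_succ, pow_mul, ih, ht]
    rw [hN]
    simp only [pow_add, pow_one, h, ht]
    ring
  have hN0 : ∀ x, N x = 0 → x = 0 := by
    intro x hx; rw [hN] at hx; exact (pow_eq_zero_iff (by omega)).1 hx
  have ha0 : a ≠ 0 := by rw [ha]; exact mul_ne_zero hu0 hB0
  have hxd : ∀ x : F, x ^ d = x * N x := by
    intro x; rw [hd', hN, pow_succ, mul_comm]
  have h7' : Nat.Coprime 7 (q - 1) := by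
    apply Nat.Coprime.coprime_dvd_right _ h7
    simpa using Nat.sub_dvd_pow_sub_pow q 1 2
  have hsq : ∀ δ : F, δ ^ q = δ → ∃ r, δ = r * r := by
    intro δ hδ
    by_cases h0 : δ = 0
    · exact ⟨0, by simp [h0]⟩
    have hchar : ringChar F ≠ 2 := by
      rw [ringChar.eq F 5]; norm_num
    refine (FiniteField.isSquare_iff hchar h0).2 ?_
    have h1 : δ ^ (q - 1) = 1 := by
      apply mul_right_cancel₀ h0
      rw [← pow_succ, Nat.sub_add_cancel (by omega), hδ, one_mul]
    have h2 : (q - 1) ∣ Fintype.card F / 2 := by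
      rw [hF, hq6]
      obtain ⟨j, hj⟩ := hqodd
      have hj' : q - 1 = 2 * j := by omega
      refine ⟨(j + 1) * (1 + q ^ 2 + q ^ 4), ?_⟩
      have : q ^ 6 = 2 * ((q - 1) * ((j + 1) * (1 + q ^ 2 + q ^ 4))) + 1 := by
        rw [hj', hj]; ring
      omega
    obtain ⟨m, hm⟩ := h2
    rw [hm, pow_mul, h1, one_pow]
  constructor
  · rw [← Finite.injective_iff_bijective]
    intro x y hxy
    have h1 : x * N x = y * N y := by
      have := mul_left_cancel₀ (inv_ne_zero ha0) hxy
      rwa [hxd, hxd] at this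
    have h2 : N x ^ 7 = N y ^ 7 := by
      have := congrArg N h1
      rw [hNmul, hNmul, hNfix _ (hNq x), hNfix _ (hNq y)] at this
      linear_combination this
    have h3 : N x = N y := pow7_inj _ h7' _ _
      (by rw [← pow_succ, Nat.sub_add_cancel (by omega), hNq])
      (by rw [← pow_succ, Nat.sub_add_cancel (by omega), hNq]) h2
    by_cases h4 : N y = 0
    · rw [hN0 _ h4, hN0 _ (h3.trans h4)]
    · rw [h3] at h1
      exact mul_right_cancel₀ h4 h1
  · rw [← Finite.injective_iff_bijective]
    intro x y hxy
    have h1 : x * (a + N x) = y * (a + N y) := by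
      have := congrArg (fun z => a * z) hxy
      simp only [hxd] at this
      field_simp at this
      linear_combination this
    -- norm of `u s + a`
    have hBmod : ∀ m, B ^ 5 ^ m = B ^ 5 ^ (m % 6) := by
      intro m
      have : ∀ j, B ^ 5 ^ (6 * j) = B := by
        intro j
        induction j with
        | zero => simp
        | succ j ih => rw [Nat.mul_succ, pow_add, pow_mul, ih, hB6]
      conv_lhs => rw [← Nat.div_add_mod m 6, pow_add, pow_mul, this]
    have hprodN : ∀ s : F, s ^ q = s → N (B + s) = (s + B) * (s + B ^ 5 ^ 1) * (s + B ^ 5 ^ 2)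
        * (s + B ^ 5 ^ 3) * (s + B ^ 5 ^ 4) * (s + B ^ 5 ^ 5) := by
      intro s hs
      have h : ∀ i, (B + s) ^ q ^ i = s + B ^ 5 ^ (k * i % 6) := by
        intro i
        rw [← hBmod, pow_mul, ← hq]
        induction i with
        | zero => simp [add_comm]
        | succ i ih => rw [pow_succ, pow_mul, ih, hadd, hs, ← pow_mul]
      have hq1 : (B + s) ^ q = s + B ^ 5 ^ (k * 1 % 6) := by rw [← h 1, pow_one]
      rw [hN]
      simp only [pow_add, pow_one, h, hq1]
      rcases hkk with e | e
      · rw [show k * 1 % 6 = 1 by omega, show k * 2 % 6 = 2 by omega,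
          show k * 3 % 6 = 3 by omega, show k * 4 % 6 = 4 by omega, show k * 5 % 6 = 5 by omega]
        generalize B ^ 5 ^ 1 = B1, B ^ 5 ^ 2 = B2, B ^ 5 ^ 3 = B3, B ^ 5 ^ 4 = B4, B ^ 5 ^ 5 = B5
        ring
      · rw [show k * 1 % 6 = 5 by omega, show k * 2 % 6 = 4 by omega,
          show k * 3 % 6 = 3 by omega, show k * 4 % 6 = 2 by omega, show k * 5 % 6 = 1 by omega]
        generalize B ^ 5 ^ 1 = B1, B ^ 5 ^ 2 = B2, B ^ 5 ^ 3 = B3, B ^ 5 ^ 4 = B4, B ^ 5 ^ 5 = B5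
        ring
    have hNa : ∀ t : F, t ^ q = t → t * N (a + t) =
        u ^ 7 * (D7 (φ α) (t / u + φ c) - D7 (φ α) (φ c)) := by
      intro t ht
      have hs : (t / u) ^ q = t / u := by rw [div_pow, ht, hu]
      have e : a + t = u * (B + t / u) := by rw [ha]; field_simp
      have := hP (t / u)
      rw [← hprodN _ hs] at this
      simp only [D7]
      rw [← this, e, hNmul, hNfix u hu]
      field_simp
    have hDinj := D7_inj (F := F) q k hq h7 hsq (φ α) (hsc α)
    have hfix : ∀ t : F, t ^ q = t → (t / u + φ c) ^ q = t / u + φ c := by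
      intro t ht
      rw [hadd, div_pow, ht, hu, hsc]
    have h2 : N x * N (a + N x) = N y * N (a + N y) := by
      rw [← hNmul, ← hNmul, h1]
    have h3 : N x = N y := by
      rw [hNa _ (hNq x), hNa _ (hNq y)] at h2
      have h4 := mul_left_cancel₀ (pow_ne_zero 7 hu0) h2
      have h5 := hDinj _ _ (hfix _ (hNq x)) (hfix _ (hNq y)) (sub_left_injective h4)
      have h6 := add_right_cancel h5
      exact (div_left_inj' hu0).1 h6
    by_cases h4 : N y = 0
    · rw [hN0 _ h4, hN0 _ (h3.trans h4)]
    · rw [h3] at h1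
      refine mul_right_cancel₀ (b := a + N y) ?_ h1
      intro h5
      have h6 := hNa _ (hNq y)
      have hN00 : N 0 = 0 := by rw [hN]; exact zero_pow (by omega)
      rw [h5, hN00, mul_zero] at h6
      have h7 := sub_eq_zero.1 ((mul_eq_zero.1 h6.symm).resolve_left (pow_ne_zero 7 hu0))
      have h8 := hDinj _ _ (hfix _ (hNq y)) (hsc c) h7
      have h9 : N y / u = 0 := by linear_combination h8
      exact h4 ((div_eq_zero_iff.1 h9).resolve_right hu0)

/-- **Corollary (p = 5, r = 6).** Let `k ≥ 1` with `gcd(k, 6) = 1`, `n = 6k`,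
`d = (5^{6k} - 1)/(5^k - 1) + 1`, and let `F` be the finite field with `5^n` elements.
Let `β ∈ F` satisfy `β⁶ + β + 2 = 0`, and let `u ∈ F_{5^k}` (fixed by `x ↦ x^{5^k}`),
`u ≠ 0`. Then `a⁻¹ x^d` is a complete permutation polynomial over `F` for each of the
eighteen listed values of `a`. -/
theorem stmt_10 (k : ℕ) (hk : 0 < k) (hk6 : Nat.gcd k 6 = 1)
    (n : ℕ) (hn : n = 6 * k) (d : ℕ) (hd : d = (5 ^ (6 * k) - 1) / (5 ^ k - 1) + 1)
    (F : Type*) [Field F] [Fintype F] (hF : Fintype.card F = 5 ^ n)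
    (β : F) (hβ : β ^ 6 + β + 2 = 0)
    (u : F) (hu : u ^ (5 ^ k) = u) (hu0 : u ≠ 0) :
    ∀ a : F,
      a ∈ ([vec6 β u 0 (-u) (3 * u) 0 (-(3 * u)),
            vec6 β u u 0 (-(2 * u)) (2 * u) 0,
            vec6 β u u 0 (-u) u (2 * u),
            vec6 β u u u u u (2 * u),
            vec6 β u u (2 * u) (-u) 0 (-u),
            vec6 β u u (-(2 * u)) (2 * u) (-u) u,
            vec6 β u u (-u) 0 (3 * u) (3 * u),
            vec6 β u (2 * u) 0 u (3 * u) u,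
            vec6 β u (2 * u) u 0 (2 * u) (2 * u),
            vec6 β u (2 * u) u (2 * u) u u,
            vec6 β u (2 * u) (2 * u) (-(2 * u)) (-u) u,
            vec6 β u (2 * u) (-(2 * u)) (-u) (2 * u) u,
            vec6 β u (-(2 * u)) (2 * u) u (-(2 * u)) (2 * u),
            vec6 β u (2 * u) (-u) 0 0 u,
            vec6 β u (-u) (-(2 * u)) (2 * u) (-u) (2 * u),
            vec6 β 0 0 u u (-(2 * u)) 0,
            vec6 β 0 0 u (3 * u) (-u) (-(3 * u)),
            vec6 β 0 u u u u 0] : List F) →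
      Function.Bijective (fun x : F => a⁻¹ * x ^ d) ∧
      Function.Bijective (fun x : F => a⁻¹ * x ^ d + x) := by
  subst hn
  have : CharP F 5 := by
    have h : (Fintype.card F : F) = 0 := FiniteField.cast_card_eq_zero F
    rw [hF, Nat.cast_pow] at h
    have h5 : ((5 : ℕ) : F) = 0 := (pow_eq_zero_iff (by omega)).1 h
    exact (CharP.charP_iff_prime_eq_zero (by norm_num)).2 h5
  obtain ⟨φ⟩ : Nonempty (ZMod 5 →+* F) := ⟨ZMod.castHom (dvd_refl 5) F⟩
  have main := core k hk6 d hd F hF φ β hβ u hu hu0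
  intro a ha
  simp only [List.mem_cons, List.not_mem_nil, or_false] at ha
  rcases ha with h | h | h | h | h | h | h | h | h | h | h | h | h | h | h | h | h | h
  · refine main (.mk 1 0 (-1) 3 0 (-3)) 3 0 (by decide +kernel) a ?_
    simp only [h, vec6, M6.ev, map_neg, map_ofNat, map_one, map_zero]; ring
  · refine main (.mk 1 1 0 (-2) 2 0) 3 0 (by decide +kernel) a ?_
    simp only [h, vec6, M6.ev, map_neg, map_ofNat, map_one, map_zero]; ring
  · refine main (.mk 1 1 0 (-1) 1 2) 3 2 (by decide +kernel) a ?_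
    simp only [h, vec6, M6.ev, map_neg, map_ofNat, map_one, map_zero]; ring
  · refine main (.mk 1 1 1 1 1 2) 3 1 (by decide +kernel) a ?_
    simp only [h, vec6, M6.ev, map_neg, map_ofNat, map_one, map_zero]; ring
  · refine main (.mk 1 1 2 (-1) 0 (-1)) 3 0 (by decide +kernel) a ?_
    simp only [h, vec6, M6.ev, map_neg, map_ofNat, map_one, map_zero]; ring
  · refine main (.mk 1 1 (-2) 2 (-1) 1) 3 2 (by decide +kernel) a ?_
    simp only [h, vec6, M6.ev, map_neg, map_ofNat, map_one, map_zero]; ring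
  · refine main (.mk 1 1 (-1) 0 3 3) 3 2 (by decide +kernel) a ?_
    simp only [h, vec6, M6.ev, map_neg, map_ofNat, map_one, map_zero]; ring
  · refine main (.mk 1 2 0 1 3 1) 3 2 (by decide +kernel) a ?_
    simp only [h, vec6, M6.ev, map_neg, map_ofNat, map_one, map_zero]; ring
  · refine main (.mk 1 2 1 0 2 2) 3 1 (by decide +kernel) a ?_
    simp only [h, vec6, M6.ev, map_neg, map_ofNat, map_one, map_zero]; ring
  · refine main (.mk 1 2 1 2 1 1) 3 2 (by decide +kernel) a ?_
    simp only [h, vec6, M6.ev, map_neg, map_ofNat, map_one, map_zero]; ring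
  · refine main (.mk 1 2 2 (-2) (-1) 1) 3 0 (by decide +kernel) a ?_
    simp only [h, vec6, M6.ev, map_neg, map_ofNat, map_one, map_zero]; ring
  · refine main (.mk 1 2 (-2) (-1) 2 1) 3 1 (by decide +kernel) a ?_
    simp only [h, vec6, M6.ev, map_neg, map_ofNat, map_one, map_zero]; ring
  · refine main (.mk 1 (-2) 2 1 (-2) 2) 3 2 (by decide +kernel) a ?_
    simp only [h, vec6, M6.ev, map_neg, map_ofNat, map_one, map_zero]; ring
  · refine main (.mk 1 2 (-1) 0 0 1) 3 0 (by decide +kernel) a ?_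
    simp only [h, vec6, M6.ev, map_neg, map_ofNat, map_one, map_zero]; ring
  · refine main (.mk 1 (-1) (-2) 2 (-1) 2) 3 0 (by decide +kernel) a ?_
    simp only [h, vec6, M6.ev, map_neg, map_ofNat, map_one, map_zero]; ring
  · refine main (.mk 0 0 1 1 (-2) 0) 0 4 (by decide +kernel) a ?_
    simp only [h, vec6, M6.ev, map_neg, map_ofNat, map_one, map_zero]; ring
  · refine main (.mk 0 0 1 3 (-1) (-3)) 0 4 (by decide +kernel) a ?_
    simp only [h, vec6, M6.ev, map_neg, map_ofNat, map_one, map_zero]; ring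
  · refine main (.mk 0 1 1 1 1 0) 0 1 (by decide +kernel) a ?_
    simp only [h, vec6, M6.ev, map_neg, map_ofNat, map_one, map_zero]; ring
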